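/- arXiv:1609.09179 — 2 statements merged into one kernel-verified Lean document; each statement's English description precedes it below -/
import Mathlib

section
/- For every feasible solution ȳ ∈ Ω, the robustness cost R_ȳ (the supremum over all scenarios c of the regret of ȳ in c) is attained at the induced scenario s(ȳ) and satisfies R_ȳ = Σ_i u i * ȳ i − min_{x∈Ω} Σ_i (l i + (u i − l i) * ȳ i) * x i. -/
open Finset

/-!
The induced scenario `s(y)` makes every item of `y` as expensive and every other item as cheap as
possible. It therefore maximizes `c ⬝ᵥ (y - x)` over the scenarios `c` for all `x` simultaneously,
and hence it also maximizes the regret of `y`, the supremum of `c ⬝ᵥ (y - x)` over `x ∈ Ω`.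
-/

section

open scoped Matrix

variable {ι R : Type*}

theorem mem_Icc_zero_one_of_binary [Zero R] [One R] [Preorder R] [ZeroLEOneClass R]
    {x : ι → R} (hx : ∀ i, x i = 0 ∨ x i = 1) :
    x ∈ Set.Icc 0 1 := by
  refine ⟨fun i => ?_, fun i => ?_⟩ <;> rcases hx i with hi | hi <;> simp [hi]

/-- The scenario induced by `y`: the upper cost on the items chosen by `y` and the lower cost on the
others, interpolated affinely so that it is defined for every vector `y`. -/
def inducedScenario [Ring R] (l u y : ι → R) : ι → R :=
  fun i => l i + (u i - l i) * y i

section InducedScenario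

variable [Ring R] {l u y : ι → R}

theorem inducedScenario_of_eq_zero {i : ι} (hi : y i = 0) : inducedScenario l u y i = l i := by
  simp [inducedScenario, hi]

theorem inducedScenario_of_eq_one {i : ι} (hi : y i = 1) : inducedScenario l u y i = u i := by
  simp [inducedScenario, hi]

theorem inducedScenario_dotProduct_self [Fintype ι] (hy : ∀ i, y i = 0 ∨ y i = 1) :
    inducedScenario l u y ⬝ᵥ y = u ⬝ᵥ y := by
  refine Finset.sum_congr rfl fun i _ => ?_
  rcases hy i with hi | hi
  · simp only [hi, mul_zero]
  · rw [inducedScenario_of_eq_one hi]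

theorem inducedScenario_mem_Icc [Preorder R] (hlu : l ≤ u) (hy : ∀ i, y i = 0 ∨ y i = 1) :
    inducedScenario l u y ∈ Set.Icc l u := by
  refine ⟨fun i => ?_, fun i => ?_⟩ <;> rcases hy i with hi | hi
  · exact (inducedScenario_of_eq_zero hi).ge
  · exact (hlu i).trans_eq (inducedScenario_of_eq_one hi).symm
  · exact (inducedScenario_of_eq_zero hi).trans_le (hlu i)
  · exact (inducedScenario_of_eq_one hi).le

theorem dotProduct_sub_le_inducedScenario_dotProduct_sub [Fintype ι] [PartialOrder R]
    [IsOrderedRing R] {c x : ι → R} (hc : c ∈ Set.Icc l u) (hx : x ∈ Set.Icc 0 1)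
    (hy : ∀ i, y i = 0 ∨ y i = 1) :
    c ⬝ᵥ (y - x) ≤ inducedScenario l u y ⬝ᵥ (y - x) := by
  refine Finset.sum_le_sum fun i _ => ?_
  rcases hy i with hi | hi
  · have hsub : (y - x) i ≤ 0 := by simpa [hi] using hx.1 i
    rw [inducedScenario_of_eq_zero hi]
    exact mul_le_mul_of_nonpos_right (hc.1 i) hsub
  · have hsub : 0 ≤ (y - x) i := by simpa [hi] using hx.2 i
    rw [inducedScenario_of_eq_one hi]
    exact mul_le_mul_of_nonneg_right (hc.2 i) hsub

end InducedScenario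

variable [Fintype ι]

/-- The regret of `y` in scenario `c` against the solutions in `Ω`. The optimal cost is an infimum,
so that `Ω` may be infinite; it is meaningful when `Ω` is nonempty and its costs are bounded
below. -/
noncomputable def regret (Ω : Set (ι → ℝ)) (y c : ι → ℝ) : ℝ :=
  c ⬝ᵥ y - sInf ((fun x => c ⬝ᵥ x) '' Ω)

/-- The robustness cost of `y`: its worst-case regret over the scenarios, which form the box
`Set.Icc l u`. -/
noncomputable def robustnessCost (l u : ι → ℝ) (Ω : Set (ι → ℝ)) (y : ι → ℝ) : ℝ :=
  sSup (regret Ω y '' Set.Icc l u)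

theorem regret_coe_finset {Ω : Finset (ι → ℝ)} (hΩ : Ω.Nonempty) (y c : ι → ℝ) :
    regret Ω y c = ∑ i, c i * y i - Ω.inf' hΩ (fun x => ∑ i, c i * x i) := by
  rw [Finset.inf'_eq_csInf_image]
  rfl

theorem regret_image_Icc_coe_finset (l u : ι → ℝ) {Ω : Finset (ι → ℝ)} (hΩ : Ω.Nonempty)
    (y : ι → ℝ) :
    regret Ω y '' Set.Icc l u =
      {r : ℝ | ∃ c : ι → ℝ, (∀ i, l i ≤ c i ∧ c i ≤ u i) ∧
        r = ∑ i, c i * y i - Ω.inf' hΩ (fun x => ∑ i, c i * x i)} := by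
  ext r
  simp only [Set.mem_image, Set.mem_Icc, Pi.le_def, ← forall_and, regret_coe_finset hΩ,
    eq_comm (a := r), Set.mem_ofPred_eq]

variable {l u y : ι → ℝ} {Ω : Set (ι → ℝ)}

theorem bddBelow_dotProduct_image (c : ι → ℝ) (hΩ : Bornology.IsBounded Ω) :
    BddBelow ((fun x => c ⬝ᵥ x) '' Ω) := by
  have hcont : Continuous fun x : ι → ℝ => c ⬝ᵥ x := by fun_prop
  exact (hΩ.isCompact_closure.image hcont).bddBelow.mono (Set.image_mono subset_closure)

theorem regret_le_regret_inducedScenario {c : ι → ℝ} (hc : c ∈ Set.Icc l u) (hne : Ω.Nonempty)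
    (hΩ : Ω ⊆ Set.Icc 0 1) (hy : ∀ i, y i = 0 ∨ y i = 1) :
    regret Ω y c ≤ regret Ω y (inducedScenario l u y) := by
  let s := inducedScenario l u y
  have hbdd : BddBelow ((fun x => s ⬝ᵥ x) '' Ω) :=
    bddBelow_dotProduct_image s ((Metric.isBounded_Icc 0 1).subset hΩ)
  have hopt : c ⬝ᵥ y - regret Ω y s ≤ sInf ((fun x => c ⬝ᵥ x) '' Ω) := by
    refine le_csInf (hne.image _) (Set.forall_mem_image.2 fun x hx => ?_)
    rw [sub_le_comm]
    calc
      c ⬝ᵥ y - c ⬝ᵥ x = c ⬝ᵥ (y - x) := (dotProduct_sub c y x).symm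
      _ ≤ s ⬝ᵥ (y - x) := dotProduct_sub_le_inducedScenario_dotProduct_sub hc (hΩ hx) hy
      _ = s ⬝ᵥ y - s ⬝ᵥ x := dotProduct_sub s y x
      _ ≤ regret Ω y s := sub_le_sub_left (csInf_le hbdd (Set.mem_image_of_mem _ hx)) _
  exact sub_le_comm.1 hopt

theorem robustness_cost_attained_at_induced_scenario_general (hlu : l ≤ u) (hne : Ω.Nonempty)
    (hΩ : Ω ⊆ Set.Icc 0 1) (hy : ∀ i, y i = 0 ∨ y i = 1) :
    IsGreatest (regret Ω y '' Set.Icc l u) (regret Ω y (inducedScenario l u y)) ∧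
      robustnessCost l u Ω y =
        u ⬝ᵥ y - sInf ((fun x => inducedScenario l u y ⬝ᵥ x) '' Ω) := by
  have hmax : IsGreatest (regret Ω y '' Set.Icc l u) (regret Ω y (inducedScenario l u y)) :=
    ⟨Set.mem_image_of_mem _ (inducedScenario_mem_Icc hlu hy),
      Set.forall_mem_image.2 fun _ hc => regret_le_regret_inducedScenario hc hne hΩ hy⟩
  refine ⟨hmax, hmax.csSup_eq.trans ?_⟩
  rw [regret, inducedScenario_dotProduct_self hy]

end

/-- For every `ybar ∈ Ω`, the robustness cost (supremum over all scenarios of the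
regret) is attained at the induced scenario `s(ybar)` and equals
`∑ i, u i * ybar i - min_{x ∈ Ω} ∑ i, (l i + (u i - l i) * ybar i) * x i`. -/
theorem robustness_cost_attained_at_induced_scenario
    (n : ℕ) (hn : 0 < n) (l u : Fin n → ℝ)
    (hl : ∀ i, 0 ≤ l i) (hlu : ∀ i, l i ≤ u i)
    (Ω : Finset (Fin n → ℝ)) (hΩ : Ω.Nonempty)
    (hbin : ∀ y ∈ Ω, ∀ i, y i = 0 ∨ y i = 1)
    (ybar : Fin n → ℝ) (hybar : ybar ∈ Ω) :
    IsGreatest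
      {r : ℝ | ∃ c : Fin n → ℝ, (∀ i, l i ≤ c i ∧ c i ≤ u i) ∧
        r = (∑ i, c i * ybar i) - Ω.inf' hΩ (fun x => ∑ i, c i * x i)}
      ((∑ i, (l i + (u i - l i) * ybar i) * ybar i) -
        Ω.inf' hΩ (fun x => ∑ i, (l i + (u i - l i) * ybar i) * x i)) ∧
    sSup {r : ℝ | ∃ c : Fin n → ℝ, (∀ i, l i ≤ c i ∧ c i ≤ u i) ∧
        r = (∑ i, c i * ybar i) - Ω.inf' hΩ (fun x => ∑ i, c i * x i)} =
      (∑ i, u i * ybar i) -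
        Ω.inf' hΩ (fun x => ∑ i, (l i + (u i - l i) * ybar i) * x i) := by
  rw [← regret_image_Icc_coe_finset l u hΩ ybar, Finset.inf'_eq_csInf_image]
  exact robustness_cost_attained_at_induced_scenario_general hlu hΩ
    (fun x hx => mem_Icc_zero_one_of_binary (hbin x hx)) (hbin ybar hybar)
end

section
/- Validity of the LP-based heuristic bound for the restricted robust shortest path problem: let β ∈ ℤ, let p ∈ P(β), and let λ : V → ℝ and μ ∈ ℝ with μ ≥ 0 satisfy, for every arc a = (i, j) ∈ A, the constraint λ j ≤ λ i + l a + (u a − l a) * (1 if a ∈ A[p] else 0) + d a * μ. Then the optimal β-restricted robustness cost min_{q∈P(β)} R_q^β is at most Σ_{a∈A[p]} u a − λ t + λ o + β * μ. -/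
open Finset

/-- The arcs of a walk described by its list of vertices: consecutive pairs. -/
def walkArcs {V : Type*} (vs : List V) : List (V × V) := vs.zip vs.tail

/-- `IsPath A o t vs` : `vs` describes a directed walk from `o` to `t` whose arcs all belong to
`A` and are pairwise distinct. -/
def IsPath {V : Type*} (A : Finset (V × V)) (o t : V) (vs : List V) : Prop :=
  vs.head? = some o ∧ vs.getLast? = some t ∧
    (∀ a ∈ walkArcs vs, a ∈ A) ∧ (walkArcs vs).Nodup

/-- The set `A[p]` of arcs of a path. -/
def arcSet {V : Type*} [DecidableEq V] (vs : List V) : Finset (V × V) :=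
  (walkArcs vs).toFinset

/-- The β-restricted robustness cost of a path `p`: the supremum over all scenarios `c`
(with `l a ≤ c a ≤ u a` for all arcs `a`) of the β-restricted regret of `p` in `c`. -/
noncomputable def robustCost {V : Type*} [Fintype V] [DecidableEq V]
    (l u : V × V → ℕ) (P : Set (List V)) (p : List V) : ℝ :=
  sSup {r : ℝ | ∃ c : V × V → ℝ, (∀ a, (l a : ℝ) ≤ c a ∧ c a ≤ u a) ∧
    r = (∑ a ∈ arcSet p, c a) - sInf {v : ℝ | ∃ q ∈ P, v = ∑ a ∈ arcSet q, c a}}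

/-!
The regret of `p` is largest when the arcs of `p` cost `u` and all others cost `l`. Take these
extremal costs plus `d * mu` as arc lengths: the dual constraints say that `lam` is a potential for
them, so every path from `o` to `t` has length at least `lam t - lam o`. A path in `P` pays at most
`β * mu` of this for resources, so its extremal cost is at least `lam t - lam o - β * mu`, which
bounds the regret of `p`.
-/

section Potential

variable {V G : Type*}

theorem sum_map_walkArcs_sub [AddCommGroup G] (f : V → G) {t : V} :
    ∀ {o : V} {vs : List V}, vs.head? = some o → vs.getLast? = some t →
      ((walkArcs vs).map fun a => f a.2 - f a.1).sum = f t - f o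
  | o, [], hhead, _ => by simp at hhead
  | o, [x], hhead, hlast => by
    obtain rfl : x = o := by simpa using hhead
    obtain rfl : x = t := by simpa using hlast
    simp [walkArcs]
  | o, x :: y :: vs, hhead, hlast => by
    obtain rfl : x = o := by simpa using hhead
    calc ((walkArcs (x :: y :: vs)).map fun a => f a.2 - f a.1).sum
        = f y - f x + ((walkArcs (y :: vs)).map fun a => f a.2 - f a.1).sum := rfl
      _ = f y - f x + (f t - f y) := by
        rw [sum_map_walkArcs_sub f (o := y) rfl (by simpa using hlast)]
      _ = f t - f x := by abel

variable [DecidableEq V] {A : Finset (V × V)} {o t : V} {q : List V}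

theorem IsPath.arcSet_subset (hq : IsPath A o t q) : arcSet q ⊆ A :=
  fun a ha => hq.2.2.1 a (List.mem_toFinset.mp ha)

theorem IsPath.sum_arcSet_sub [AddCommGroup G] (hq : IsPath A o t q) (f : V → G) :
    ∑ a ∈ arcSet q, (f a.2 - f a.1) = f t - f o := by
  obtain ⟨hhead, hlast, -, hnodup⟩ := hq
  rw [arcSet, List.sum_toFinset _ hnodup, sum_map_walkArcs_sub f hhead hlast]

theorem IsPath.sub_le_sum_arcSet [AddCommGroup G] [PartialOrder G] [IsOrderedAddMonoid G]
    (hq : IsPath A o t q) {f : V → G} {w : V × V → G} (hf : ∀ a ∈ A, f a.2 - f a.1 ≤ w a) :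
    f t - f o ≤ ∑ a ∈ arcSet q, w a :=
  hq.sum_arcSet_sub f ▸ sum_le_sum fun a ha => hf a (hq.arcSet_subset ha)

end Potential

theorem sum_sub_sum_le_sum_sub_sum_piecewise {ι G : Type*} [DecidableEq ι] [AddCommGroup G]
    [PartialOrder G] [IsOrderedAddMonoid G] {l c u : ι → G} (hl : ∀ i, l i ≤ c i)
    (hu : ∀ i, c i ≤ u i) (S T : Finset ι) :
    ∑ i ∈ S, c i - ∑ i ∈ T, c i ≤ ∑ i ∈ S, u i - ∑ i ∈ T, S.piecewise u l i := by
  have hincrease : ∑ i ∈ T, S.piecewise u l i - ∑ i ∈ T, c i ≤ ∑ i ∈ S, u i - ∑ i ∈ S, c i :=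
    calc ∑ i ∈ T, S.piecewise u l i - ∑ i ∈ T, c i
        = ∑ i ∈ T ∩ S, u i + ∑ i ∈ T \ S, l i - ∑ i ∈ T, c i := by rw [sum_piecewise]
      _ ≤ ∑ i ∈ T ∩ S, u i + ∑ i ∈ T \ S, c i - ∑ i ∈ T, c i := by gcongr with i; exact hl i
      _ = ∑ i ∈ T ∩ S, (u i - c i) := by
        rw [← sum_inter_add_sum_sdiff T S c, add_sub_add_right_eq_sub, sum_sub_distrib]
      _ ≤ ∑ i ∈ S, (u i - c i) :=
        sum_le_sum_of_subset_of_nonneg inter_subset_right fun i _ _ => sub_nonneg.mpr (hu i)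
      _ = ∑ i ∈ S, u i - ∑ i ∈ S, c i := sum_sub_distrib ..
  rwa [sub_le_sub_iff, add_comm, ← sub_le_sub_iff]

section RobustCost

variable {V : Type*} [Fintype V] [DecidableEq V] {l u : V × V → ℕ} {P : Set (List V)} {p : List V}

theorem robustCost_nonneg (hp : p ∈ P) : 0 ≤ robustCost l u P p := by
  refine Real.sSup_nonneg ?_
  rintro _ ⟨c, hc, rfl⟩
  have hcost : ∀ q : List V, 0 ≤ ∑ a ∈ arcSet q, c a := fun q =>
    sum_nonneg fun a _ => (Nat.cast_nonneg (l a)).trans (hc a).1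
  have hbdd : BddBelow {v : ℝ | ∃ q ∈ P, v = ∑ a ∈ arcSet q, c a} :=
    ⟨0, by rintro _ ⟨q, -, rfl⟩; exact hcost q⟩
  exact sub_nonneg.mpr (csInf_le hbdd ⟨p, hp, rfl⟩)

theorem sInf_robustCost_le (hp : p ∈ P) :
    sInf {r : ℝ | ∃ q ∈ P, r = robustCost l u P q} ≤ robustCost l u P p :=
  csInf_le ⟨0, by rintro _ ⟨q, hq, rfl⟩; exact robustCost_nonneg hq⟩ ⟨p, hp, rfl⟩

theorem robustCost_le_of_forall_sum_sub_le (hlu : ∀ a, l a ≤ u a) (hP : P.Nonempty) {B : ℝ}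
    (hB : ∀ q ∈ P, ∑ a ∈ arcSet p, (u a : ℝ) -
      ∑ a ∈ arcSet q, (arcSet p).piecewise (fun a => (u a : ℝ)) (fun a => (l a : ℝ)) a ≤ B) :
    robustCost l u P p ≤ B := by
  refine csSup_le ⟨_, fun a => u a, fun a => ⟨Nat.cast_le.mpr (hlu a), le_rfl⟩, rfl⟩ ?_
  rintro _ ⟨c, hc, rfl⟩
  refine sub_le_comm.mp (le_csInf (hP.elim fun q hq => ⟨_, q, hq, rfl⟩) ?_)
  rintro _ ⟨q, hq, rfl⟩
  exact sub_le_comm.mp <| (sum_sub_sum_le_sum_sub_sum_piecewise (fun a => (hc a).1)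
    (fun a => (hc a).2) (arcSet p) (arcSet q)).trans (hB q hq)

end RobustCost

theorem rrsp_lp_heuristic_upper_bound_general
    {V : Type*} [Fintype V] [DecidableEq V] {A : Finset (V × V)} {o t : V}
    {l u : V × V → ℕ} (hlu : ∀ a, l a ≤ u a) {d : V × V → ℝ} {β : ℝ} {P : Set (List V)}
    (hP : ∀ q ∈ P, IsPath A o t q ∧ ∑ a ∈ arcSet q, d a ≤ β) (hPne : P.Nonempty)
    (p : List V) {lam : V → ℝ} {mu : ℝ} (hmu : 0 ≤ mu)
    (hdual : ∀ a ∈ A, lam a.2 ≤ lam a.1 + (l a : ℝ) +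
      ((u a : ℝ) - (l a : ℝ)) * (if a ∈ arcSet p then 1 else 0) + d a * mu) :
    robustCost l u P p ≤ (∑ a ∈ arcSet p, (u a : ℝ)) - lam t + lam o + β * mu := by
  refine robustCost_le_of_forall_sum_sub_le hlu hPne fun q hq => ?_
  obtain ⟨hpath, hresource⟩ := hP q hq
  have hpotential : lam t - lam o ≤ ∑ a ∈ arcSet q,
      ((arcSet p).piecewise (fun a => (u a : ℝ)) (fun a => (l a : ℝ)) a + d a * mu) := by
    refine hpath.sub_le_sum_arcSet fun a ha => ?_
    have hdual_a := hdual a ha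
    simp only [Finset.piecewise]
    split_ifs at hdual_a ⊢ <;> linarith
  have hpenalty : (∑ a ∈ arcSet q, d a) * mu ≤ β * mu :=
    mul_le_mul_of_nonneg_right hresource hmu
  rw [sum_add_distrib, ← sum_mul] at hpotential
  linarith

/-- validity of the LP-based heuristic bound for R-RSP: if `p ∈ P(β)` and
`(λ, μ)` with `μ ≥ 0` satisfy, for every arc `(i, j) ∈ A`,
`λ j ≤ λ i + l a + (u a - l a) * [a ∈ A[p]] + d a * μ`, then the optimal β-restricted
robustness cost `min_{q ∈ P(β)} R_q^β` is at most
`∑_{a ∈ A[p]} u a - λ t + λ o + β * μ`. -/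
theorem rrsp_lp_heuristic_upper_bound
    {V : Type*} [Fintype V] [DecidableEq V]
    (A : Finset (V × V)) (o t : V)
    (l u : V × V → ℕ) (hlu : ∀ a, l a ≤ u a) (d : V × V → ℕ) (β : ℤ)
    (P : Set (List V))
    (hP : P = {q : List V | IsPath A o t q ∧ (∑ a ∈ arcSet q, (d a : ℤ)) ≤ β})
    (hPne : P.Nonempty)
    (p : List V) (hp : p ∈ P)
    (lam : V → ℝ) (mu : ℝ) (hmu : 0 ≤ mu)
    (hdual : ∀ a ∈ A, lam a.2 ≤ lam a.1 + (l a : ℝ) +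
      ((u a : ℝ) - (l a : ℝ)) * (if a ∈ arcSet p then 1 else 0) + (d a : ℝ) * mu) :
    sInf {r : ℝ | ∃ q ∈ P, r = robustCost l u P q} ≤
      (∑ a ∈ arcSet p, (u a : ℝ)) - lam t + lam o + (β : ℝ) * mu :=
  (sInf_robustCost_le hp).trans <| rrsp_lp_heuristic_upper_bound_general hlu
    (fun q hq => by rw [hP] at hq; exact ⟨hq.1, by exact_mod_cast hq.2⟩) hPne p hmu hdual
end
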